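/- Let R be a ring and let l : C'' ⟶ C and k : C ⟶ C' be morphisms of cochain complexes of R-modules. Let φ : (cone k)⟦−1⟧ ⟶ cone l be the chain map given (up to sign) by the canonical projection of (cone k)⟦−1⟧ onto C followed by the canonical inclusion of C into cone l. Then the mapping cone cone(k ∘ l) of the composite k ∘ l : C'' ⟶ C' is chain homotopy equivalent to the mapping cone cone(φ). -/

import Mathlib

/-!
The complexes `cone l → cone (l ≫ k) → cone k → (cone l)⟦1⟧` form the octahedral triangle, which is
distinguished in the homotopy category. Its inverse rotation starts with the map
`(cone k)⟦-1⟧ ⟶ cone l` which is `-φ`, and its third vertex is `cone (l ≫ k)`. The standard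
triangle on `φ` has the same first map up to sign and third vertex `cone φ`; since a map in a
triangulated category determines its cone up to isomorphism, the two cones are isomorphic in the
homotopy category, that is, chain homotopy equivalent.
-/

open CategoryTheory CategoryTheory.Category CochainComplex

lemma shift_neg_map_comp_shift_unitIso {D : Type*} [Category D] [HasShift D ℤ] {X Y Z : D}
    (a : X ⟶ Y⟦(1 : ℤ)⟧) (b : Y ⟶ Z) :
    (CategoryTheory.shiftFunctor D (-1 : ℤ)).map (a ≫ b⟦(1 : ℤ)⟧') ≫
        (shiftShiftNeg Z (1 : ℤ)).hom =
      (CategoryTheory.shiftFunctor D (-1 : ℤ)).map a ≫ (shiftShiftNeg Y (1 : ℤ)).hom ≫ b := by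
  rw [Functor.map_comp, assoc]
  exact congrArg (_ ≫ ·) ((shiftEquiv D (1 : ℤ)).unitIso.inv.naturality b)

/-- The first map of the inverse rotation of the octahedral triangle is, up to the sign introduced by
rotation, the projection `(cone k)⟦-1⟧ ⟶ C` followed by the inclusion `C ⟶ cone l`. -/
lemma invRotate_mappingConeCompTriangle_mor₁ {R : Type} [Ring R]
    {C'' C C' : CochainComplex (ModuleCat R) ℤ} (l : C'' ⟶ C) (k : C ⟶ C') :
    (mappingConeCompTriangle l k).invRotate.mor₁ =
      -((CategoryTheory.shiftFunctor (CochainComplex (ModuleCat R) ℤ) (-1 : ℤ)).map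
        (mappingCone.triangle k).mor₃ ≫ (shiftShiftNeg C (1 : ℤ)).hom ≫ mappingCone.inr l) :=
  congrArg Neg.neg
    (shift_neg_map_comp_shift_unitIso (mappingCone.triangle k).mor₃ (mappingCone.inr l))

/-- **Cone of a composite as a cone on cones.**
Let `l : C'' ⟶ C` and `k : C ⟶ C'` be morphisms of cochain complexes of `R`-modules, and let
`φ : (mappingCone k)⟦-1⟧ ⟶ mappingCone l` be given (up to sign) by the canonical projection of
`(mappingCone k)⟦-1⟧` onto `C` followed by the canonical inclusion of `C` into `mappingCone l`.
Then `mappingCone (l ≫ k)` is chain homotopy equivalent to `mappingCone φ`. -/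
theorem cone_of_comp_homotopyEquiv_cone_of_shifted_cone_map
    {R : Type} [Ring R] (C'' C C' : CochainComplex (ModuleCat R) ℤ)
    (l : C'' ⟶ C) (k : C ⟶ C')
    (φ : (mappingCone k)⟦(-1 : ℤ)⟧ ⟶ mappingCone l)
    (hφ : φ = (CategoryTheory.shiftFunctor (CochainComplex (ModuleCat R) ℤ) (-1 : ℤ)).map
        (mappingCone.triangle k).mor₃ ≫ (shiftShiftNeg C (1 : ℤ)).hom ≫ mappingCone.inr l) :
    Nonempty (HomotopyEquiv (mappingCone (l ≫ k)) (mappingCone φ)) := by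
  let Q := HomotopyCategory.quotient (ModuleCat R) (ComplexShape.up ℤ)
  have h₁ : Q.mapTriangle.obj (mappingConeCompTriangle l k).invRotate ∈
      distTriang (HomotopyCategory (ModuleCat R) (ComplexShape.up ℤ)) :=
    Pretriangulated.isomorphic_distinguished _
      (Pretriangulated.inv_rot_of_distTriang _
        (HomotopyCategory.mappingConeCompTriangleh_distinguished l k)) _
      (Q.mapTriangleInvRotateIso.symm.app _)
  have h₂ := HomotopyCategory.mappingCone_triangleh_distinguished φ
  have comm : (Q.mapTriangle.obj (mappingConeCompTriangle l k).invRotate).mor₁ ≫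
      (Iso.refl (Q.obj (mappingCone l))).hom =
      (-Iso.refl (Q.obj ((mappingCone k)⟦(-1 : ℤ)⟧))).hom ≫ (mappingCone.triangleh φ).mor₁ := by
    have h : Q.map (mappingConeCompTriangle l k).invRotate.mor₁ = -Q.map φ := by
      rw [invRotate_mappingConeCompTriangle_mor₁, ← hφ]
      exact Q.map_neg
    refine (comp_id _).trans (h.trans ?_)
    exact ((Preadditive.neg_comp _ _).trans (congrArg Neg.neg (id_comp _))).symm
  exact ⟨HomotopyCategory.homotopyEquivOfIso (Pretriangulated.Triangle.π₃.mapIso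
    (Pretriangulated.isoTriangleOfIso₁₂ _ _ h₁ h₂ _ _ comm))⟩
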